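/- If W ⊆ E_3 is a 2-dimensional subspace exactly one of whose three nonzero elements has a 2-element representative, then there exist a 2-element subset P ⊆ I and a 4-element subset Q ⊆ I with |P ∩ Q| = 1 such that the three nonzero elements of W are [P], [Q], and [P Δ Q] (symmetric difference), and the subset P is uniquely determined by W; conversely, every such pair (P, Q) determines such a 2-dimensional subspace (type I.2, as for η = w_1 − w_2, ξ = w_1 − w_3 + w_4 − w_5). -/

import Mathlib

/-!
Addition in `E₃` is symmetric difference of even subsets, and two even subsets have the same class
exactly when they are equal or complementary (`cls_symmDiff`, `cls_eq_cls_iff`). So every nonzero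
class is represented by subsets of sizes 2 and 6 only, or of size 4 only, and in the first case the
2-element representative is unique.

A plane over `F₂` has nonzero vectors `x, y, x + y` for any two distinct nonzero members `x, y`.
If `x = [P]` with `|P| = 2` is the only one having a 2-element representative, then `y = [Q]` and
`x + y = [P Δ Q]` with `|Q| = |P Δ Q| = 4`, and `|P Δ Q| = 6 - 2 |P ∩ Q|` gives `|P ∩ Q| = 1`.
Conversely `|P ∩ Q| = 1` gives `|P Δ Q| = 4`, so `[P]`, `[Q]` are distinct and nonzero, and in the
plane they span only `[P]` has a 2-element representative.
-/

open Finset Submodule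

noncomputable section

def sumMap : (Fin 8 → ZMod 2) →ₗ[ZMod 2] ZMod 2 where
  toFun v := ∑ i, v i
  map_add' v w := by simp [Finset.sum_add_distrib]
  map_smul' c v := by simp [Finset.mul_sum]

def V3 : Submodule (ZMod 2) (Fin 8 → ZMod 2) := LinearMap.ker sumMap

@[simp] lemma sumMap_apply (v : Fin 8 → ZMod 2) : sumMap v = ∑ i, v i := rfl

lemma mem_V3 (v : Fin 8 → ZMod 2) : v ∈ V3 ↔ ∑ i, v i = 0 := by
  simp [V3, LinearMap.mem_ker]

def onesV : V3 := ⟨fun _ => 1, by rw [mem_V3]; decide⟩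

abbrev E3 := V3 ⧸ span (ZMod 2) {onesV}

def indFun (S : Finset (Fin 8)) : Fin 8 → ZMod 2 := fun i => if i ∈ S then 1 else 0

open Classical in
def cls (S : Finset (Fin 8)) : E3 :=
  if h : indFun S ∈ V3 then Submodule.Quotient.mk (⟨indFun S, h⟩ : V3) else 0

/-- `x` has a `k`-element representative -/
def hasRep (k : ℕ) (x : E3) : Prop := ∃ S : Finset (Fin 8), S.card = k ∧ cls S = x

lemma indFun_mem_V3 (S : Finset (Fin 8)) : indFun S ∈ V3 ↔ Even S.card := by
  rw [mem_V3]
  simp [indFun, ZMod.natCast_eq_zero_iff_even]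

lemma cls_of_even {S : Finset (Fin 8)} (h : Even S.card) :
    cls S = Submodule.Quotient.mk (⟨indFun S, (indFun_mem_V3 S).2 h⟩ : V3) := by
  rw [cls, dif_pos]

lemma indFun_symmDiff (S T : Finset (Fin 8)) :
    indFun (symmDiff S T) = indFun S + indFun T := by
  funext i
  by_cases hS : i ∈ S <;> by_cases hT : i ∈ T <;>
    simp [indFun, Finset.mem_symmDiff, hS, hT, CharTwo.add_self_eq_zero]

lemma card_symmDiff_add (S T : Finset (Fin 8)) :
    (symmDiff S T).card + 2 * (S ∩ T).card = S.card + T.card := by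
  have h : (symmDiff S T).card = (S \ T).card + (T \ S).card := by
    rw [symmDiff_def, Finset.sup_eq_union, Finset.card_union_of_disjoint disjoint_sdiff_sdiff]
  have h1 := Finset.card_sdiff_add_card_inter S T
  have h2 := Finset.card_sdiff_add_card_inter T S
  rw [Finset.inter_comm T S] at h2
  omega

lemma even_card_symmDiff {S T : Finset (Fin 8)} (hS : Even S.card) (hT : Even T.card) :
    Even (symmDiff S T).card := by
  have := card_symmDiff_add S T
  grind

lemma cls_symmDiff {S T : Finset (Fin 8)} (hS : Even S.card) (hT : Even T.card) :
    cls (symmDiff S T) = cls S + cls T := by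
  rw [cls_of_even hS, cls_of_even hT, cls_of_even (even_card_symmDiff hS hT),
    ← Submodule.Quotient.mk_add]
  congr 1
  exact Subtype.ext (indFun_symmDiff S T)

lemma cls_eq_zero_iff {S : Finset (Fin 8)} (hS : Even S.card) :
    cls S = 0 ↔ S = ∅ ∨ S = Finset.univ := by
  rw [cls_of_even hS, Submodule.Quotient.mk_eq_zero, Submodule.mem_span_singleton]
  constructor
  · rintro ⟨a, ha⟩
    have h : ∀ i, a = indFun S i := fun i => by
      have := congrFun (congrArg Subtype.val ha) i
      simpa [onesV] using this
    by_cases ha0 : a = 0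
    · left
      ext i
      have := h i
      by_contra hi
      simp_all [indFun]
    · right
      ext i
      have := h i
      by_contra hi
      simp_all [indFun]
  · rintro (rfl | rfl)
    · exact ⟨0, Subtype.ext (by funext i; simp [indFun])⟩
    · exact ⟨1, Subtype.ext (by funext i; simp [indFun, onesV])⟩

lemma E3_add_self (x : E3) : x + x = 0 := by
  rw [← two_smul (ZMod 2) x, show (2 : ZMod 2) = 0 from rfl, zero_smul]

lemma E3_add_eq_zero_iff {x y : E3} : x + y = 0 ↔ x = y := by
  constructor
  · intro h
    exact add_right_cancel (h.trans (E3_add_self y).symm)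
  · rintro rfl
    exact E3_add_self x

lemma cls_eq_cls_iff {S T : Finset (Fin 8)} (hS : Even S.card) (hT : Even T.card) :
    cls S = cls T ↔ S = T ∨ S = Tᶜ := by
  rw [← E3_add_eq_zero_iff, ← cls_symmDiff hS hT, cls_eq_zero_iff (even_card_symmDiff hS hT)]
  refine or_congr symmDiff_eq_bot ?_
  rw [← Finset.top_eq_univ, symmDiff_eq_top]
  exact ⟨fun h => h.eq_compl, fun h => h ▸ isCompl_compl.symm⟩

lemma exists_cls (x : E3) : ∃ S : Finset (Fin 8), Even S.card ∧ cls S = x := by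
  obtain ⟨v, rfl⟩ := Submodule.Quotient.mk_surjective _ x
  have hv : indFun (Finset.univ.filter fun i => v.1 i = 1) = v.1 := by
    funext i
    have h01 : ∀ a : ZMod 2, (if a = 1 then (1 : ZMod 2) else 0) = a := by decide
    simpa [indFun] using h01 (v.1 i)
  have hS : Even (Finset.univ.filter fun i => v.1 i = 1).card := by
    rw [← indFun_mem_V3, hv]
    exact v.2
  refine ⟨_, hS, ?_⟩
  rw [cls_of_even hS]
  congr 1
  exact Subtype.ext hv

lemma cls_inj_of_card_two {S T : Finset (Fin 8)} (hS : S.card = 2) (hT : T.card = 2)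
    (h : cls S = cls T) : S = T := by
  rcases (cls_eq_cls_iff (by rw [hS]; decide) (by rw [hT]; decide)).1 h with h | rfl
  · exact h
  · rw [Finset.card_compl, hT] at hS
    simp at hS

/-- A nonzero class without a 2-element representative is represented by 4-element subsets only:
the complement of a 6-element representative would have 2 elements. -/
lemma card_eq_four_iff {S : Finset (Fin 8)} (hS : Even S.card) :
    S.card = 4 ↔ cls S ≠ 0 ∧ ¬ hasRep 2 (cls S) := by
  have hc : Sᶜ.card = 8 - S.card := by simp [Finset.card_compl]
  constructor
  · intro h4
    constructor
    · rw [Ne, cls_eq_zero_iff hS]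
      rintro (rfl | rfl) <;> simp at h4
    · rintro ⟨T, hT, hTS⟩
      rcases (cls_eq_cls_iff (by rw [hT]; decide) hS).1 hTS with rfl | rfl <;> omega
  · rintro ⟨h0, h2⟩
    have hle : S.card ≤ 8 := by simpa using Finset.card_le_univ S
    rw [Ne, cls_eq_zero_iff hS, ← Finset.card_eq_zero, ← Finset.card_eq_iff_eq_univ] at h0
    have hn2 : S.card ≠ 2 := fun h => h2 ⟨S, h, rfl⟩
    have hn6 : S.card ≠ 6 := fun h => h2 ⟨Sᶜ, by omega,
      (cls_eq_cls_iff (by rw [hc, h]; decide) hS).2 (Or.inr rfl)⟩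
    simp only [Fintype.card_fin] at h0
    obtain ⟨k, hk⟩ := hS
    omega

lemma linearIndependent_pair {x y : E3} (hx : x ≠ 0) (hy : y ≠ 0) (hxy : x ≠ y) :
    LinearIndependent (ZMod 2) ![x, y] := by
  rw [LinearIndependent.pair_iff]
  have h01 : ∀ c : ZMod 2, c = 0 ∨ c = 1 := by decide
  intro a b h
  rcases h01 a with rfl | rfl <;> rcases h01 b with rfl | rfl <;>
    simp_all [E3_add_eq_zero_iff]

lemma finrank_span_pair_eq_two {x y : E3} (hx : x ≠ 0) (hy : y ≠ 0) (hxy : x ≠ y) :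
    Module.finrank (ZMod 2) (span (ZMod 2) {x, y}) = 2 := by
  have := finrank_span_eq_card (linearIndependent_pair hx hy hxy)
  rwa [Fintype.card_fin, Matrix.range_cons_cons_empty] at this

lemma nonzero_span_pair {x y : E3} (hx : x ≠ 0) (hy : y ≠ 0) (hxy : x ≠ y) :
    {z : E3 | z ∈ span (ZMod 2) {x, y} ∧ z ≠ 0} = {x, y, x + y} := by
  have h01 : ∀ c : ZMod 2, c = 0 ∨ c = 1 := by decide
  ext z
  simp only [Set.mem_ofPred_eq, Set.mem_insert_iff, Set.mem_singleton_iff,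
    Submodule.mem_span_pair]
  constructor
  · rintro ⟨⟨a, b, rfl⟩, hz⟩
    rcases h01 a with rfl | rfl <;> rcases h01 b with rfl | rfl <;> simp_all
  · rintro (rfl | rfl | rfl)
    · exact ⟨⟨1, 0, by simp⟩, hx⟩
    · exact ⟨⟨0, 1, by simp⟩, hy⟩
    · exact ⟨⟨1, 1, by simp⟩, fun h => hxy (E3_add_eq_zero_iff.1 h)⟩

lemma exists_eq_span_pair {W : Submodule (ZMod 2) E3} (hW : Module.finrank (ZMod 2) W = 2)
    {x : E3} (hxW : x ∈ W) (hx : x ≠ 0) :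
    ∃ y, y ≠ 0 ∧ x ≠ y ∧ W = span (ZMod 2) {x, y} := by
  have hex : ∃ y ∈ W, y ∉ span (ZMod 2) {x} := by
    by_contra! h
    have := Submodule.finrank_mono (show W ≤ span (ZMod 2) {x} from h)
    rw [hW, finrank_span_singleton hx] at this
    omega
  obtain ⟨y, hyW, hy⟩ := hex
  have hy0 : y ≠ 0 := by
    rintro rfl
    exact hy (zero_mem _)
  have hxy : x ≠ y := by
    rintro rfl
    exact hy (mem_span_singleton_self x)
  refine ⟨y, hy0, hxy, (Submodule.eq_of_le_of_finrank_eq ?_ ?_).symm⟩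
  · rw [Submodule.span_le]
    rintro z (rfl | rfl)
    exacts [hxW, hyW]
  · rw [finrank_span_pair_eq_two hx hy0 hxy, hW]

/-- a 2-dimensional subspace `W ⊆ E₃` exactly one of whose three
nonzero elements has a 2-element representative arises from a 2-element subset
`P ⊆ I` and a 4-element subset `Q ⊆ I` with `|P ∩ Q| = 1`, the nonzero elements of
`W` being `[P]`, `[Q]` and `[P Δ Q]`; the subset `P` is uniquely determined by `W`.
Conversely every such pair `(P, Q)` determines such a subspace (type I.2). -/
theorem statement14 :
    (∀ W : Submodule (ZMod 2) E3, Module.finrank (ZMod 2) W = 2 →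
      Nat.card {x : E3 // x ∈ W ∧ x ≠ 0 ∧ hasRep 2 x} = 1 →
      ∃! P : Finset (Fin 8), P.card = 2 ∧
        ∃ Q : Finset (Fin 8), Q.card = 4 ∧ (P ∩ Q).card = 1 ∧
          {x : E3 | x ∈ W ∧ x ≠ 0} = {cls P, cls Q, cls (symmDiff P Q)}) ∧
    (∀ P Q : Finset (Fin 8), P.card = 2 → Q.card = 4 → (P ∩ Q).card = 1 →
      ∃ W : Submodule (ZMod 2) E3, Module.finrank (ZMod 2) W = 2 ∧
        Nat.card {x : E3 // x ∈ W ∧ x ≠ 0 ∧ hasRep 2 x} = 1 ∧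
        {x : E3 | x ∈ W ∧ x ≠ 0} = {cls P, cls Q, cls (symmDiff P Q)}) := by
  refine ⟨fun W hW hcard => ?_, fun P Q hP hQ hPQ => ?_⟩
  · obtain ⟨hsub, ⟨⟨x, hxW, hx0, P, hP, rfl⟩⟩⟩ := Nat.card_eq_one_iff_unique.1 hcard
    have huniq : ∀ z ∈ W, z ≠ 0 → hasRep 2 z → z = cls P := fun z hz hz0 hz2 =>
      congrArg Subtype.val (hsub.elim ⟨z, hz, hz0, hz2⟩ ⟨cls P, hxW, hx0, P, hP, rfl⟩)
    have hPe : Even P.card := by rw [hP]; decide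
    obtain ⟨y, hy0, hxy, rfl⟩ := exists_eq_span_pair hW hxW hx0
    obtain ⟨Q, hQe, rfl⟩ := exists_cls y
    have hset := nonzero_span_pair hx0 hy0 hxy
    rw [← cls_symmDiff hPe hQe] at hset
    -- Members of the plane other than `0` and `[P]` are classes of 4-element subsets.
    have hfour : ∀ S : Finset (Fin 8), Even S.card →
        cls S ∈ ({cls P, cls Q, cls (symmDiff P Q)} : Set E3) → cls S ≠ cls P → S.card = 4 := by
      intro S hS hmem hne
      rw [← hset] at hmem
      exact (card_eq_four_iff hS).2 ⟨hmem.2, fun h => hne (huniq _ hmem.1 hmem.2 h)⟩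
    have hQ4 := hfour Q hQe (by simp) hxy.symm
    have hD4 := hfour _ (even_card_symmDiff hPe hQe) (by simp) (by
      rw [cls_symmDiff hPe hQe]
      simpa using hy0)
    have hsum := card_symmDiff_add P Q
    refine ⟨P, ⟨hP, Q, hQ4, by omega, hset⟩, ?_⟩
    rintro P' ⟨hP', Q', -, -, hset'⟩
    have hmem : cls P' ∈ {x : E3 | x ∈ span (ZMod 2) {cls P, cls Q} ∧ x ≠ 0} := by
      rw [hset']
      simp
    exact cls_inj_of_card_two hP' hP (huniq _ hmem.1 hmem.2 ⟨P', hP', rfl⟩)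
  · have hPe : Even P.card := by rw [hP]; decide
    have hQe : Even Q.card := by rw [hQ]; decide
    have hsum := card_symmDiff_add P Q
    obtain ⟨hQ0, hQ2⟩ := (card_eq_four_iff hQe).1 hQ
    obtain ⟨-, hD2⟩ := (card_eq_four_iff (even_card_symmDiff hPe hQe)).1 (by omega)
    have hP0 : cls P ≠ 0 := by
      rw [Ne, cls_eq_zero_iff hPe]
      rintro (rfl | rfl) <;> simp at hP
    have hne : cls P ≠ cls Q := fun h => hQ2 ⟨P, hP, h⟩
    have hset := nonzero_span_pair hP0 hQ0 hne
    rw [← cls_symmDiff hPe hQe] at hset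
    refine ⟨span (ZMod 2) {cls P, cls Q}, finrank_span_pair_eq_two hP0 hQ0 hne, ?_, hset⟩
    rw [Nat.card_eq_one_iff_unique]
    have key : ∀ z : E3, z ∈ span (ZMod 2) {cls P, cls Q} ∧ z ≠ 0 ∧ hasRep 2 z → z = cls P := by
      rintro z ⟨hz, hz0, hz2⟩
      have hmem : z ∈ {x : E3 | x ∈ span (ZMod 2) {cls P, cls Q} ∧ x ≠ 0} := ⟨hz, hz0⟩
      rw [hset] at hmem
      rcases hmem with rfl | rfl | rfl
      exacts [rfl, absurd hz2 hQ2, absurd hz2 hD2]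
    exact ⟨⟨fun a b => Subtype.ext ((key a a.2).trans (key b b.2).symm)⟩,
      ⟨⟨cls P, subset_span (by simp), hP0, P, hP, rfl⟩⟩⟩

end
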